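/- arXiv:1503.07383 — 2 statements merged into one kernel-verified Lean document; each statement's English description precedes it below -/
import Mathlib

section
/- Let m ≥ 1 and let ∞ > s₁ ≥ s₂ ≥ ⋯ ≥ s_m ≥ 0 be real numbers. Then the iterated integral ∫_{s₁}^{∞} dt₁ ∫_{s₂}^{s₁} dt₂ ⋯ ∫_{s_m}^{s_{m−1}} dt_m ∫_{0}^{s_m} dt_{m+1} ∏_{k=1}^{m+1} e^{−t_k²/2} · ∏_{1≤j<k≤m+1} (t_j² − t_k²) equals √(π/2) · ∏_{k=1}^{m} s_k e^{−s_k²/2} · ∏_{1≤j<k≤m} (s_j² − s_k²). -/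
open MeasureTheory

noncomputable def gW (t : ℝ) : ℝ := Real.exp (-t ^ 2 / 2)

noncomputable def gF : ℕ → ℝ → ℝ
  | 0, t => ∫ x in (0:ℝ)..t, gW x
  | (c + 1), t => t * gW t * (-t ^ 2) ^ c

noncomputable def gP : ℕ → Polynomial ℝ
  | 0 => 1
  | (c + 1) => Polynomial.X ^ (c + 1) + Polynomial.C (2 * (c : ℝ) + 1) * Polynomial.X ^ c

noncomputable def gG (c : ℕ) (t : ℝ) : ℝ := gW t * (gP c).eval (-t ^ 2)

noncomputable def gE : ℕ → ℝ
  | 0 => Real.sqrt (Real.pi / 2)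
  | (_ + 1) => 0

lemma gW_cont : Continuous gW := by unfold gW; fun_prop

lemma gG_cont (c : ℕ) : Continuous (gG c) := by
  unfold gG
  have := gW_cont
  have h2 := (gP c).continuous
  exact this.mul (h2.comp (by fun_prop))

lemma gP_aux (c : ℕ) : (Polynomial.C (2 * (c : ℝ) + 1) * Polynomial.X ^ c).degree < ((c + 1 : ℕ) : WithBot ℕ) :=
  lt_of_le_of_lt (Polynomial.degree_C_mul_X_pow_le _ _) (by exact_mod_cast Nat.lt_succ_self c)

lemma gP_monic (c : ℕ) : (gP c).Monic := by
  cases c with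
  | zero => exact Polynomial.monic_one
  | succ c => exact Polynomial.monic_X_pow_add (gP_aux c)

lemma gP_deg (c : ℕ) : (gP c).natDegree = c := by
  cases c with
  | zero => exact Polynomial.natDegree_one
  | succ c =>
    unfold gP
    rw [Polynomial.natDegree_add_eq_left_of_degree_lt, Polynomial.natDegree_X_pow]
    rw [Polynomial.degree_X_pow]
    exact gP_aux c

lemma gF_deriv (c : ℕ) (t : ℝ) : HasDerivAt (gF c) (gG c t) t := by
  cases c with
  | zero =>
    have : gG 0 t = gW t := by simp [gG, gP]
    rw [this]
    exact intervalIntegral.integral_hasDerivAt_right (gW_cont.intervalIntegrable _ _)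
      (gW_cont.stronglyMeasurableAtFilter _ _) gW_cont.continuousAt
  | succ c =>
    have h1 : HasDerivAt gW (gW t * (-t)) t := by
      unfold gW
      have : HasDerivAt (fun t : ℝ => -t ^ 2 / 2) (-t) t := by
        have := (hasDerivAt_pow 2 t).neg.div_const 2
        refine HasDerivAt.congr_deriv this ?_
        simp; ring
      exact this.exp
    have h2 : HasDerivAt (fun t : ℝ => -t ^ 2) (-(2 * t)) t := by
      have := (hasDerivAt_pow 2 t).neg
      refine HasDerivAt.congr_deriv this ?_
      simp
    have h3 := ((hasDerivAt_id t).mul h1).mul (h2.pow c)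
    refine HasDerivAt.congr_deriv h3 ?_
    simp only [gG, gP, Polynomial.eval_add, Polynomial.eval_mul, Polynomial.eval_pow,
      Polynomial.eval_X, Polynomial.eval_C, id, Pi.mul_apply, Pi.pow_apply]
    cases c with
    | zero => simp; ring
    | succ c => simp only [Nat.add_sub_cancel]; push_cast; ring

lemma gInt_pow (n : ℕ) : Integrable (fun t : ℝ => gW t * t ^ n) := by
  have h := integrable_rpow_mul_exp_neg_mul_sq (b := 1 / 2) (by norm_num) (s := (n : ℝ))
    (by have : (0:ℝ) ≤ n := Nat.cast_nonneg n
        linarith)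
  refine h.congr (Filter.Eventually.of_forall fun t => ?_)
  simp only [Real.rpow_natCast, gW]
  rw [mul_comm]
  congr 2
  ring

lemma gF_int (c : ℕ) : Integrable (gF (c + 1)) := by
  refine ((gInt_pow (2 * c + 1)).const_mul ((-1) ^ c)).congr (Filter.Eventually.of_forall fun t => ?_)
  simp only [gF]
  rw [neg_pow (t ^ 2) c]
  ring

lemma gG_int (c : ℕ) : Integrable (gG c) := by
  cases c with
  | zero =>
    refine (gInt_pow 0).congr (Filter.Eventually.of_forall fun t => ?_)
    simp [gG, gP]
  | succ c =>
    refine (((gInt_pow (2 * (c + 1))).const_mul ((-1) ^ (c + 1))).add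
      ((gInt_pow (2 * c)).const_mul ((-1) ^ c * (2 * c + 1)))).congr
        (Filter.Eventually.of_forall fun t => ?_)
    simp only [gG, gP, Polynomial.eval_add, Polynomial.eval_mul, Polynomial.eval_pow,
      Polynomial.eval_X, Polynomial.eval_C, Pi.add_apply]
    rw [neg_pow (t ^ 2) c, neg_pow (t ^ 2) (c + 1)]
    ring

lemma gF_tendsto (c : ℕ) : Filter.Tendsto (gF c) Filter.atTop (nhds (gE c)) := by
  cases c with
  | zero =>
    have hi : Integrable gW := by simpa using gInt_pow 0
    have h := intervalIntegral_tendsto_integral_Ioi 0 hi.integrableOn Filter.tendsto_id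
    have e : ∫ x in Set.Ioi (0:ℝ), gW x = gE 0 := by
      have h1 := integral_gaussian_Ioi (1 / 2)
      have h2 : (fun x : ℝ => Real.exp (-(1 / 2) * x ^ 2)) = gW := by
        funext x; unfold gW; congr 1; ring
      rw [h2] at h1
      rw [h1]
      unfold gE
      rw [show Real.pi / (1 / 2) = (Real.pi / 2) * 2 ^ 2 by ring, Real.sqrt_mul (by positivity),
        Real.sqrt_sq (by norm_num)]
      ring
    rw [e] at h
    exact h
  | succ c =>
    exact tendsto_zero_of_hasDerivAt_of_integrableOn_Ioi (a := 0) (fun x _ => gF_deriv (c + 1) x)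
      (gG_int _).integrableOn (gF_int c).integrableOn

lemma gG_Ioi (c : ℕ) (a : ℝ) : ∫ t in Set.Ioi a, gG c t = gE c - gF c a :=
  integral_Ioi_of_hasDerivAt_of_tendsto' (fun x _ => gF_deriv c x) (gG_int c).integrableOn
    (gF_tendsto c)

lemma gG_Ioo (c : ℕ) (a b : ℝ) (h : a ≤ b) : ∫ t in Set.Ioo a b, gG c t = gF c b - gF c a := by
  rw [← integral_Ioc_eq_integral_Ioo, ← intervalIntegral.integral_of_le h]
  exact intervalIntegral.integral_eq_sub_of_hasDerivAt (fun x _ => gF_deriv c x)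
    (gG_int c).intervalIntegrable

lemma gF_zero (c : ℕ) : gF c 0 = 0 := by
  cases c <;> simp [gF]

lemma prod_swap_fin {n : ℕ} (f : Fin n → Fin n → ℝ) :
    ∏ i : Fin n, ∏ j ∈ Finset.Ioi i, f i j = ∏ j : Fin n, ∏ i ∈ Finset.Iio j, f i j := by
  apply Finset.prod_comm'
  simp

lemma vdm_det {n : ℕ} (t : Fin n → ℝ) :
    (Matrix.vandermonde fun i => -(t i) ^ 2).det =
      ∏ k : Fin n, ∏ j ∈ Finset.Iio k, ((t j) ^ 2 - (t k) ^ 2) := by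
  rw [Matrix.det_vandermonde, prod_swap_fin]
  refine Finset.prod_congr rfl fun k _ => Finset.prod_congr rfl fun j _ => ?_
  ring

lemma integrand_det {n : ℕ} (t : Fin n → ℝ) :
    (∏ k : Fin n, Real.exp (-(t k) ^ 2 / 2)) *
        ∏ k : Fin n, ∏ j ∈ Finset.Iio k, ((t j) ^ 2 - (t k) ^ 2) =
      ∑ σ : Equiv.Perm (Fin n), ((Equiv.Perm.sign σ : ℤ) : ℝ) * ∏ i, gG (σ i) (t i) := by
  rw [← vdm_det, Matrix.det_eval_matrixOfPolynomials_eq_det_vandermonde _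
    (fun i : Fin n => gP i) (fun i => gP_deg i) (fun i => gP_monic i),
    ← Matrix.det_mul_column, ← Matrix.det_transpose, Matrix.det_apply']
  rfl

lemma integral_det {n : ℕ} (I : Fin n → Set ℝ) :
    (∫ t in Set.univ.pi I, (∏ k : Fin n, Real.exp (-(t k) ^ 2 / 2)) *
        ∏ k : Fin n, ∏ j ∈ Finset.Iio k, ((t j) ^ 2 - (t k) ^ 2)) =
      (Matrix.of fun c i : Fin n => ∫ t in I i, gG c t).det := by
  simp_rw [integrand_det]
  rw [volume_pi, Measure.restrict_pi_pi, integral_finsetSum, Matrix.det_apply']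
  · refine Finset.sum_congr rfl fun σ _ => ?_
    rw [integral_const_mul]
    congr 1
    exact integral_fintype_prod_eq_prod (𝕜 := ℝ) (fun (i : Fin n) (t : ℝ) => gG (σ i) t)
  · intro σ _
    apply Integrable.const_mul
    exact Integrable.fintype_prod (𝕜 := ℝ) (f := fun (i : Fin n) (t : ℝ) => gG (σ i) t)
      fun i => (gG_int _).integrableOn

lemma det_telescope {m : ℕ} (A U : Matrix (Fin (m + 1)) (Fin (m + 1)) ℝ)
    (hl : ∀ c, A c (Fin.last m) = U c (Fin.last m))
    (h : ∀ c (i : Fin m), A c i.castSucc = U c i.castSucc - U c i.succ) : A.det = U.det := by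
  rw [← Matrix.det_submatrix_equiv_self Fin.revPerm A, ← Matrix.det_submatrix_equiv_self Fin.revPerm U]
  symm
  apply Matrix.det_eq_of_forall_col_eq_smul_add_pred (fun _ => 1)
  · intro c
    simp [hl]
  · intro c i
    simp [Fin.rev_succ, Fin.rev_castSucc, h]

lemma det_U {m : ℕ} (s : ℕ → ℝ) (U : Matrix (Fin (m + 1)) (Fin (m + 1)) ℝ)
    (h0 : ∀ c, U c 0 = gE c) (h1 : ∀ c (i : Fin m), U c i.succ = gF c (s (i + 1))) :
    U.det = Real.sqrt (Real.pi / 2) * (∏ k : Fin m, s (k + 1) * gW (s (k + 1))) *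
      ∏ k : Fin m, ∏ j ∈ Finset.Iio k, ((s (j + 1)) ^ 2 - (s (k + 1)) ^ 2) := by
  rw [Matrix.det_succ_column_zero, Fin.sum_univ_succ, Finset.sum_eq_zero, add_zero]
  · rw [← vdm_det (fun i : Fin m => s (i + 1)), mul_assoc (Real.sqrt _), ← Matrix.det_transpose (Matrix.vandermonde _),
      ← Matrix.det_mul_row, h0]
    simp only [Fin.val_zero, pow_zero, one_mul, gE]
    congr 2
    ext c i
    simp [h1, gF, Matrix.vandermonde_apply]
  · intro i _
    rw [h0]
    simp [gE]

/-- Gauss case, odd order.  Integrating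
`∏_{k=1}^{m+1} e^{-t_k²/2} ∏_{j<k}(t_j² - t_k²)` over the interlacing box
`t₁ ∈ (s₁,∞), t_k ∈ (s_k, s_{k-1}) (2 ≤ k ≤ m), t_{m+1} ∈ (0, s_m)` yields
`√(π/2) ∏ s_k e^{-s_k²/2} ∏_{j<k}(s_j² - s_k²)`. -/
theorem gauss_odd_integrate_odd (m : ℕ) (hm : 1 ≤ m) (s : ℕ → ℝ)
    (hdec : ∀ i, 1 ≤ i → i < m → s (i + 1) ≤ s i) (hsm : 0 ≤ s m) :
    (∫ t in {t : Fin (m + 1) → ℝ | ∀ i : Fin (m + 1),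
        (if (i : ℕ) < m then s ((i : ℕ) + 1) else 0) < t i ∧
          (0 < (i : ℕ) → t i < s (i : ℕ))},
      (∏ k : Fin (m + 1), Real.exp (-(t k) ^ 2 / 2)) *
        ∏ k : Fin (m + 1), ∏ j ∈ Finset.Iio k, ((t j) ^ 2 - (t k) ^ 2)) =
    Real.sqrt (Real.pi / 2) *
      (∏ k ∈ Finset.Icc 1 m, s k * Real.exp (-(s k) ^ 2 / 2)) *
      ∏ k ∈ Finset.Icc 1 m, ∏ j ∈ Finset.Ico 1 k, ((s j) ^ 2 - (s k) ^ 2) := by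
  have hset : {t : Fin (m + 1) → ℝ | ∀ i : Fin (m + 1),
        (if (i : ℕ) < m then s ((i : ℕ) + 1) else 0) < t i ∧
          (0 < (i : ℕ) → t i < s (i : ℕ))} = Set.univ.pi (fun i : Fin (m + 1) =>
      {x : ℝ | (if (i : ℕ) < m then s ((i : ℕ) + 1) else 0) < x ∧
          (0 < (i : ℕ) → x < s (i : ℕ))}) := by
    ext t; simp
  rw [hset, integral_det]
  have hA : ∀ (c i : Fin (m + 1)), (∫ t in {x : ℝ | (if (i : ℕ) < m then s ((i : ℕ) + 1) else 0) < x ∧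
          (0 < (i : ℕ) → x < s (i : ℕ))}, gG c t) =
      (if (i : ℕ) = 0 then gE c else gF c (s i)) -
        gF c (if (i : ℕ) < m then s ((i : ℕ) + 1) else 0) := by
    intro c i
    by_cases hi : (i : ℕ) = 0
    · rw [if_pos hi, ← gG_Ioi]
      congr 2
      ext x
      simp [hi]
    · rw [if_neg hi, ← gG_Ioo]
      · congr 2
        ext x
        simp [Nat.pos_of_ne_zero hi]
      · split_ifs with h
        · exact hdec _ (by omega) h
        · have : (i : ℕ) = m := by omega
          rw [this]; exact hsm
  rw [det_telescope _ (Matrix.of fun c i : Fin (m + 1) =>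
    (if (i : ℕ) = 0 then gE c else gF c (s i))), det_U s]
  · have e : Finset.Icc 1 m = Finset.Ico 1 (m + 1) := by ext; simp [Nat.lt_succ_iff]
    rw [e, Finset.prod_Ico_eq_prod_range, Finset.prod_Ico_eq_prod_range, Nat.add_sub_cancel,
      ← Fin.prod_univ_eq_prod_range (fun k => s (1 + k) * Real.exp (-(s (1 + k)) ^ 2 / 2)),
      ← Fin.prod_univ_eq_prod_range
        (fun k => ∏ j ∈ Finset.Ico 1 (1 + k), ((s j) ^ 2 - (s (1 + k)) ^ 2))]
    congr 1
    · simp only [gW, add_comm]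
    · refine Finset.prod_congr rfl fun k _ => ?_
      refine Finset.prod_bij (fun j _ => (j : ℕ) + 1) ?_ ?_ ?_ ?_
      · intro j hj
        simp at hj ⊢
        omega
      · intro a _ b _ hab
        exact Fin.ext (by omega)
      · intro b hb
        simp at hb
        exact ⟨⟨b - 1, by omega⟩, by simp [Fin.lt_def]; omega, by simp only []; omega⟩
      · intro j _
        rw [add_comm 1 (k : ℕ)]
  · intro c; simp
  · intro c i; simp
  · intro c
    have : m ≠ 0 := by omega
    rw [Matrix.of_apply, Matrix.of_apply, hA]
    simp [gF_zero]
  · intro c i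
    rw [Matrix.of_apply, Matrix.of_apply, Matrix.of_apply, hA]
    simp
end

section
/- Let a > −1, let m ≥ 1, and let 1 > s₁ ≥ s₂ ≥ ⋯ ≥ s_m ≥ 0 be real numbers. Then the iterated integral ∫_{s₁}^{1} dt₁ ∫_{s₂}^{s₁} dt₂ ⋯ ∫_{s_m}^{s_{m−1}} dt_m ∫_{0}^{s_m} dt_{m+1} ∏_{k=1}^{m+1} (1 − t_k²)^a · ∏_{1≤j<k≤m+1} (t_j² − t_k²) equals ( √π Γ(a+1) / (2 Γ(a+3/2)) ) · ( ∏_{k=1}^{m} 1/(2a+1+2k) ) · ∏_{k=1}^{m} s_k (1 − s_k²)^{a+1} · ∏_{1≤j<k≤m} (s_j² − s_k²). -/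
open MeasureTheory

/-- The half mass of the symmetric Jacobi weight. -/
theorem jac_half_mass (a : ℝ) (ha : -1 < a) :
    ∫ t in (0 : ℝ)..1, (1 - t ^ 2) ^ a =
      Real.sqrt Real.pi * Real.Gamma (a + 1) / (2 * Real.Gamma (a + 3 / 2)) := by
  have hb : ∫ y in (0 : ℝ)..1, y ^ ((1 / 2 : ℝ) - 1) * (1 - y) ^ ((a + 1) - 1) =
      ProbabilityTheory.beta (1 / 2) (a + 1) := by
    rw [ProbabilityTheory.beta_eq_betaIntegralReal _ _ (by norm_num) (by linarith),
      Complex.betaIntegral]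
    have : ∫ x in (0 : ℝ)..1, (x : ℂ) ^ (((1 / 2 : ℝ) : ℂ) - 1) *
        (1 - (x : ℂ)) ^ (((a + 1 : ℝ) : ℂ) - 1) =
        ∫ x in (0 : ℝ)..1, ((x ^ ((1 / 2 : ℝ) - 1) * (1 - x) ^ ((a + 1) - 1) : ℝ) : ℂ) := by
      apply intervalIntegral.integral_congr
      intro x hx
      rw [Set.uIcc_of_le zero_le_one] at hx
      simp only
      rw [Complex.ofReal_mul, Complex.ofReal_cpow hx.1, Complex.ofReal_cpow (by linarith [hx.2])]
      push_cast
      rfl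
    rw [this, intervalIntegral.integral_ofReal, Complex.ofReal_re]
  have h2 := integral_comp_rpow_Ioi
    ((Set.Ioo (0 : ℝ) 1).indicator
      (fun y => y ^ ((1 / 2 : ℝ) - 1) * (1 - y) ^ ((a + 1) - 1))) (p := 2) (by norm_num)
  rw [setIntegral_indicator measurableSet_Ioo,
    Set.inter_eq_self_of_subset_right (fun x hx => hx.1), ← integral_Ioc_eq_integral_Ioo,
    ← intervalIntegral.integral_of_le zero_le_one, hb] at h2
  have h3 : ∫ x in Set.Ioi (0 : ℝ), (|(2 : ℝ)| * x ^ ((2 : ℝ) - 1)) •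
      ((Set.Ioo (0 : ℝ) 1).indicator
      (fun y => y ^ ((1 / 2 : ℝ) - 1) * (1 - y) ^ ((a + 1) - 1))) (x ^ (2 : ℝ)) =
      ∫ x in Set.Ioi (0 : ℝ), (Set.Ioo (0 : ℝ) 1).indicator
        (fun x => 2 * (1 - x ^ 2) ^ a) x := by
    apply setIntegral_congr_fun measurableSet_Ioi
    intro x hx
    have hx0 : (0 : ℝ) < x := hx
    by_cases h1 : x < 1
    · have e1 : x ^ (2 : ℝ) ∈ Set.Ioo (0 : ℝ) 1 := by
        rw [Real.rpow_two]; constructor <;> nlinarith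
      have e2 : x ∈ Set.Ioo (0 : ℝ) 1 := ⟨hx0, h1⟩
      simp only [Set.indicator_of_mem e1, Set.indicator_of_mem e2, smul_eq_mul]
      rw [← Real.rpow_mul hx0.le, Real.rpow_two]
      have : (2 : ℝ) * (1 / 2 - 1) = -1 := by norm_num
      rw [this, Real.rpow_neg_one, show (2 : ℝ) - 1 = 1 by norm_num, Real.rpow_one,
        show a + 1 - 1 = a by ring, abs_of_pos (by norm_num : (0 : ℝ) < 2)]
      field_simp
    · have e1 : x ^ (2 : ℝ) ∉ Set.Ioo (0 : ℝ) 1 := by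
        rw [Real.rpow_two]; intro h; have := h.2; nlinarith
      have e2 : x ∉ Set.Ioo (0 : ℝ) 1 := fun h => h1 h.2
      simp only [Set.indicator_of_notMem e1, Set.indicator_of_notMem e2, smul_zero]
  rw [h3, setIntegral_indicator measurableSet_Ioo,
    Set.inter_eq_self_of_subset_right (fun x hx => hx.1), ← integral_Ioc_eq_integral_Ioo,
    ← intervalIntegral.integral_of_le zero_le_one, intervalIntegral.integral_const_mul,
    ProbabilityTheory.beta, Real.Gamma_one_half_eq,
    show (1 / 2 : ℝ) + (a + 1) = a + 3 / 2 by ring] at h2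
  have hG : Real.Gamma (a + 3 / 2) ≠ 0 := (Real.Gamma_pos_of_pos (by linarith)).ne'
  field_simp at h2 ⊢
  linarith

/-- Monic polynomials (in `u = -t²`) whose weighted integrals are explicit. -/
noncomputable def jacP (a : ℝ) : ℕ → Polynomial ℝ
  | 0 => 1
  | j + 1 => Polynomial.X ^ (j + 1) +
      Polynomial.C ((2 * j + 1) / (2 * a + 1 + 2 * ((j : ℝ) + 1))) * Polynomial.X ^ j

/-- Primitives of the weighted polynomials. -/
noncomputable def jacH (a : ℝ) (x : ℝ) : ℕ → ℝ
  | 0 => ∫ t in (0 : ℝ)..x, (1 - t ^ 2) ^ a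
  | j + 1 => (1 / (2 * a + 1 + 2 * ((j : ℝ) + 1))) * ((x * (1 - x ^ 2) ^ (a + 1)) * (-x ^ 2) ^ j)

theorem jacP_lt (a : ℝ) (j : ℕ) :
    (Polynomial.C ((2 * j + 1) / (2 * a + 1 + 2 * ((j : ℝ) + 1))) *
      Polynomial.X ^ j : Polynomial ℝ).degree < ((j + 1 : ℕ) : WithBot ℕ) :=
  lt_of_le_of_lt (Polynomial.degree_C_mul_X_pow_le _ _) (by exact_mod_cast Nat.lt_succ_self j)

theorem jacP_monic (a : ℝ) (j : ℕ) : (jacP a j).Monic := by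
  cases j with
  | zero => exact Polynomial.monic_one
  | succ j => exact Polynomial.monic_X_pow_add (jacP_lt a j)

theorem jacP_natDegree (a : ℝ) (j : ℕ) : (jacP a j).natDegree = j := by
  cases j with
  | zero => exact Polynomial.natDegree_one
  | succ j =>
    apply Polynomial.natDegree_eq_of_degree_eq_some
    rw [jacP, Polynomial.degree_add_eq_left_of_degree_lt, Polynomial.degree_X_pow]
    rw [Polynomial.degree_X_pow]
    exact jacP_lt a j

theorem jac_weight_int (a : ℝ) (ha : -1 < a) {l h : ℝ} (h0 : 0 ≤ l) (hlh : l ≤ h) (h1 : h ≤ 1) :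
    IntervalIntegrable (fun t : ℝ => (1 - t ^ 2) ^ a) volume l h := by
  have e : IntervalIntegrable (fun t : ℝ => (1 - t) ^ a) volume l h := by
    have := (intervalIntegral.intervalIntegrable_rpow' (a := 1 - l) (b := 1 - h) ha).comp_sub_left 1
    simpa using this
  have c : ContinuousOn (fun t : ℝ => (1 + t) ^ a) (Set.uIcc l h) := by
    rw [Set.uIcc_of_le hlh]
    apply ContinuousOn.rpow_const (by fun_prop)
    intro x hx
    left
    linarith [hx.1]
  refine (e.mul_continuousOn c).congr ?_
  intro t ht
  rw [Set.uIoc_of_le hlh] at ht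
  simp only
  rw [← Real.mul_rpow (by linarith [ht.2]) (by linarith [ht.1])]
  ring_nf

theorem jac_int (a : ℝ) (ha : -1 < a) {l h : ℝ} (h0 : 0 ≤ l) (hlh : l ≤ h) (h1 : h ≤ 1) (j : ℕ) :
    IntervalIntegrable (fun t : ℝ => (1 - t ^ 2) ^ a * (jacP a j).eval (-t ^ 2)) volume l h := by
  refine (jac_weight_int a ha h0 hlh h1).mul_continuousOn ?_
  exact ((jacP a j).continuous.comp (by fun_prop)).continuousOn

theorem jac_eval (a : ℝ) (ha : -1 < a) {l h : ℝ} (h0 : 0 ≤ l) (hlh : l ≤ h) (h1 : h ≤ 1) (j : ℕ) :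
    ∫ t in l..h, (1 - t ^ 2) ^ a * (jacP a j).eval (-t ^ 2) = jacH a h j - jacH a l j := by
  cases j with
  | zero =>
    simp only [jacP, jacH, Polynomial.eval_one, mul_one]
    rw [intervalIntegral.integral_interval_sub_left]
    · exact jac_weight_int a ha le_rfl (h0.trans hlh) h1
    · exact jac_weight_int a ha le_rfl h0 (hlh.trans h1)
  | succ j =>
    refine intervalIntegral.integral_eq_sub_of_hasDerivAt_of_le
      (f := fun x => jacH a x (j + 1)) hlh ?_ ?_ (jac_int a ha h0 hlh h1 (j + 1))
    · simp only [jacH]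
      refine ContinuousOn.mul (by fun_prop) (ContinuousOn.mul (ContinuousOn.mul (by fun_prop) ?_)
        (by fun_prop))
      apply ContinuousOn.rpow_const (by fun_prop)
      intro x hx
      right
      linarith
    · intro x hx
      have hx0 : 0 < x := by linarith [hx.1]
      have hp : 0 < 1 - x ^ 2 := by nlinarith [hx.2]
      have d : (2 * a + 1 + 2 * ((j : ℝ) + 1)) ≠ 0 := by
        have : (0 : ℝ) ≤ j := Nat.cast_nonneg j
        have : 0 < 2 * a + 1 + 2 * ((j : ℝ) + 1) := by linarith
        exact this.ne'
      have hu : HasDerivAt (fun x : ℝ => 1 - x ^ 2) (-(2 * x)) x := by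
        have := (hasDerivAt_pow 2 x).const_sub 1
        simpa using this
      have hv : HasDerivAt (fun x : ℝ => -x ^ 2) (-(2 * x)) x := by
        have := (hasDerivAt_pow 2 x).fun_neg
        simpa using this
      have hw := hu.rpow_const (p := a + 1) (Or.inl hp.ne')
      have := ((((hasDerivAt_id x).mul hw).mul (hv.pow j))).const_mul
        (1 / (2 * a + 1 + 2 * ((j : ℝ) + 1)))
      simp only [jacH]
      refine this.congr_deriv ?_
      simp only [jacP, Polynomial.eval_add, Polynomial.eval_mul, Polynomial.eval_C,
        Polynomial.eval_pow, Polynomial.eval_X, id, Pi.mul_apply, Pi.pow_apply]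
      rw [show a + 1 - 1 = a by ring, Real.rpow_add hp, Real.rpow_one]
      generalize (1 - x ^ 2) ^ a = W
      cases j with
      | zero =>
        simp at d ⊢
        field_simp
        ring
      | succ i =>
        push_cast at d ⊢
        rw [pow_succ (-x ^ 2) (i + 1), pow_succ (-x ^ 2) i]
        generalize (-x ^ 2) ^ i = Z
        field_simp
        ring

theorem jac_box (n : ℕ) (lo hi : Fin n → ℝ) (f : Fin n → ℝ → ℝ)
    (hle : ∀ i, lo i ≤ hi i)
    (hf : ∀ i j, IntervalIntegrable (f j) volume (lo i) (hi i)) :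
    ∫ t in {t : Fin n → ℝ | ∀ i, lo i < t i ∧ t i < hi i},
      (Matrix.of fun i j => f j (t i)).det =
    (Matrix.of fun i j => ∫ x in (lo i)..(hi i), f j x).det := by
  have hset : {t : Fin n → ℝ | ∀ i, lo i < t i ∧ t i < hi i} =
      Set.univ.pi fun i => Set.Ioo (lo i) (hi i) := by
    ext t; simp
  have hint : ∀ i j, Integrable (f j) (volume.restrict (Set.Ioo (lo i) (hi i))) := by
    intro i j
    exact (intervalIntegrable_iff_integrableOn_Ioo_of_le (hle i)).1 (hf i j)
  rw [hset, volume_pi, Measure.restrict_pi_pi]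
  simp_rw [← Matrix.det_transpose (Matrix.of _), Matrix.det_apply', Matrix.transpose_apply,
    Matrix.of_apply]
  rw [integral_finsetSum]
  · refine Finset.sum_congr rfl fun σ _ => ?_
    rw [integral_const_mul, integral_fintype_prod_eq_prod (fun i x => f (σ i) x)]
    congr 1
    refine Finset.prod_congr rfl fun i _ => ?_
    rw [intervalIntegral.integral_of_le (hle i), integral_Ioc_eq_integral_Ioo]
  · intro σ _
    refine Integrable.const_mul ?_ _
    exact Integrable.fintype_prod (f := fun i x => f (σ i) x) fun i => hint i (σ i)

theorem jac_vand (n : ℕ) (y : Fin n → ℝ) :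
    (Matrix.vandermonde fun i => -y i ^ 2).det =
      ∏ k : Fin n, ∏ j ∈ Finset.Iio k, (y j ^ 2 - y k ^ 2) := by
  rw [Matrix.det_vandermonde]
  rw [Finset.prod_comm' (t' := Finset.univ) (s' := fun k => Finset.Iio k)]
  · refine Finset.prod_congr rfl fun k _ => Finset.prod_congr rfl fun j _ => ?_
    ring
  · intro i j; simp

theorem jac_fin1 (m : ℕ) (f : ℕ → ℝ) :
    ∏ k ∈ Finset.Icc 1 m, f k = ∏ k : Fin m, f (k + 1) := by
  rw [Fin.prod_univ_eq_prod_range (fun k => f (k + 1)) m, Finset.range_eq_Ico,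
    Finset.prod_Ico_add' f 0 m 1]
  rfl

theorem jac_fin2 (m : ℕ) (k : Fin m) (f : ℕ → ℝ) :
    ∏ j ∈ Finset.Ico 1 ((k : ℕ) + 1), f j = ∏ j ∈ Finset.Iio k, f (j + 1) := by
  have : ∏ j ∈ Finset.Iio k, f (j + 1) =
      ∏ j ∈ (Finset.Iio k).map Fin.valEmbedding, f (j + 1) := by
    rw [Finset.prod_map]; rfl
  rw [this, Fin.map_valEmbedding_Iio, show Finset.Iio (k : ℕ) = Finset.Ico 0 (k : ℕ) by ext; simp,
    Finset.prod_Ico_add' f 0 k 1]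

theorem jac_det (a : ℝ) (ha : -1 < a) (m : ℕ) (lo hi : Fin (m + 1) → ℝ) (h0 : hi 0 = 1)
    (hl : lo (Fin.last m) = 0) (hlh : ∀ i : Fin m, lo i.castSucc = hi i.succ) :
    (Matrix.of fun i j : Fin (m + 1) => jacH a (hi i) j - jacH a (lo i) j).det =
      jacH a 1 0 * ((∏ k : Fin m, (1 : ℝ) / (2 * a + 1 + 2 * ((k : ℕ) + 1 : ℝ))) *
      ((∏ k : Fin m, (hi k.succ * (1 - hi k.succ ^ 2) ^ (a + 1))) *
      (Matrix.vandermonde fun k : Fin m => -hi k.succ ^ 2).det)) := by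
  have hz : ∀ j, jacH a 0 j = 0 := by
    intro j; cases j <;> simp [jacH]
  have step : (Matrix.of fun i j : Fin (m + 1) => jacH a (hi i) j - jacH a (lo i) j).det =
      (Matrix.of fun i j : Fin (m + 1) => jacH a (hi i) j).det := by
    rw [← Matrix.det_submatrix_equiv_self Fin.revPerm,
      ← Matrix.det_submatrix_equiv_self Fin.revPerm (Matrix.of fun i j => jacH a (hi i) j)]
    symm
    apply Matrix.det_eq_of_forall_row_eq_smul_add_pred (fun _ => 1)
    · intro j
      simp [hl, hz]
    · intro i j
      simp [Fin.rev_succ, Fin.rev_castSucc, hlh]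
  rw [step, Matrix.det_succ_row_zero, Fin.sum_univ_succ, Finset.sum_eq_zero, add_zero]
  · simp only [Fin.val_zero, pow_zero, one_mul, Matrix.of_apply, h0]
    congr 1
    rw [← Matrix.det_mul_column, ← Matrix.det_mul_row]
    congr 1
  · intro j _
    have : a + 1 ≠ 0 := by linarith
    simp [h0, jacH, Real.zero_rpow this]

/-- symmetric Jacobi case, odd order.  Integrating
`∏_{k=1}^{m+1} (1-t_k²)^a ∏_{j<k}(t_j² - t_k²)` over the interlacing box
`t₁ ∈ (s₁,1), t_k ∈ (s_k, s_{k-1}) (2 ≤ k ≤ m), t_{m+1} ∈ (0, s_m)` yields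
`(√π Γ(a+1)/(2Γ(a+3/2))) ∏ 1/(2a+1+2k) ∏ s_k (1-s_k²)^{a+1} ∏_{j<k}(s_j² - s_k²)`. -/
theorem jacobi_odd_integrate_odd (a : ℝ) (ha : -1 < a) (m : ℕ) (hm : 1 ≤ m) (s : ℕ → ℝ)
    (hs1 : s 1 < 1) (hdec : ∀ i, 1 ≤ i → i < m → s (i + 1) ≤ s i) (hsm : 0 ≤ s m) :
    (∫ t in {t : Fin (m + 1) → ℝ | ∀ i : Fin (m + 1),
        (if (i : ℕ) < m then s ((i : ℕ) + 1) else 0) < t i ∧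
          t i < (if (i : ℕ) = 0 then 1 else s (i : ℕ))},
      (∏ k : Fin (m + 1), (1 - (t k) ^ 2) ^ a) *
        ∏ k : Fin (m + 1), ∏ j ∈ Finset.Iio k, ((t j) ^ 2 - (t k) ^ 2)) =
    (Real.sqrt Real.pi * Real.Gamma (a + 1) / (2 * Real.Gamma (a + 3 / 2))) *
      (∏ k ∈ Finset.Icc 1 m, (1 : ℝ) / (2 * a + 1 + 2 * k)) *
      (∏ k ∈ Finset.Icc 1 m, s k * (1 - (s k) ^ 2) ^ (a + 1)) *
      ∏ k ∈ Finset.Icc 1 m, ∏ j ∈ Finset.Ico 1 k, ((s j) ^ 2 - (s k) ^ 2) := by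
  have hanti : ∀ i j, 1 ≤ i → i ≤ j → j ≤ m → s j ≤ s i := by
    intro i j hi hij
    induction j, hij using Nat.le_induction with
    | base => intro _; exact le_rfl
    | succ j hj ih => intro h; exact (hdec j (by omega) (by omega)).trans (ih (by omega))
  have hnn : ∀ i, 1 ≤ i → i ≤ m → 0 ≤ s i := fun i h1 h2 => hsm.trans (hanti i m h1 h2 le_rfl)
  have hlt : ∀ i, 1 ≤ i → i ≤ m → s i ≤ 1 := fun i h1 h2 => (hanti 1 i le_rfl h1 h2).trans hs1.le
  set lo : Fin (m + 1) → ℝ := fun i => if (i : ℕ) < m then s ((i : ℕ) + 1) else 0 with hlo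
  set hi : Fin (m + 1) → ℝ := fun i => if (i : ℕ) = 0 then 1 else s (i : ℕ) with hhi
  have hlo0 : ∀ i, 0 ≤ lo i := by
    intro i
    simp only [hlo]
    split_ifs with h
    · exact hnn _ (by omega) (by omega)
    · exact le_rfl
  have hhi1 : ∀ i, hi i ≤ 1 := by
    intro i
    have := i.2
    simp only [hhi]
    split_ifs with h
    · exact le_rfl
    · exact hlt _ (by omega) (by omega)
  have hle : ∀ i, lo i ≤ hi i := by
    intro i
    have := i.2
    simp only [hlo, hhi]
    split_ifs with h h'
    · exact hlt _ (by omega) (by omega)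
    · exact hdec _ (by omega) (by omega)
    · exact zero_le_one
    · exact hnn _ (by omega) (by omega)
  have hintegrand : ∀ t : Fin (m + 1) → ℝ,
      (∏ k : Fin (m + 1), (1 - (t k) ^ 2) ^ a) *
        ∏ k : Fin (m + 1), ∏ j ∈ Finset.Iio k, ((t j) ^ 2 - (t k) ^ 2) =
      (Matrix.of fun i j : Fin (m + 1) =>
        (fun (j : Fin (m + 1)) (x : ℝ) => (1 - x ^ 2) ^ a * (jacP a j).eval (-x ^ 2)) j
          (t i)).det := by
    intro t
    rw [← jac_vand, Matrix.det_eval_matrixOfPolynomials_eq_det_vandermonde _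
      (fun j : Fin (m + 1) => jacP a j) (fun j => jacP_natDegree a j) (fun j => jacP_monic a j),
      ← Matrix.det_mul_column]
    rfl
  simp_rw [hintegrand]
  have key := jac_box (m + 1) lo hi
    (fun (j : Fin (m + 1)) (x : ℝ) => (1 - x ^ 2) ^ a * (jacP a j).eval (-x ^ 2)) hle
    (fun i j => jac_int a ha (hlo0 i) (hle i) (hhi1 i) j)
  refine key.trans ?_
  simp_rw [fun i (j : Fin (m + 1)) => jac_eval a ha (hlo0 i) (hle i) (hhi1 i) j]
  rw [jac_det a ha m lo hi (by simp [hhi]) (by simp [hlo]) (by intro i; simp [hlo, hhi]),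
    jac_vand m (fun k => hi k.succ), jac_fin1, jac_fin1, jac_fin1]
  simp_rw [jac_fin2]
  have e : jacH a 1 0 = ∫ t in (0 : ℝ)..1, (1 - t ^ 2) ^ a := rfl
  rw [e, jac_half_mass a ha]
  have hs : ∀ k : Fin m, hi k.succ = s ((k : ℕ) + 1) := by intro k; simp [hhi]
  simp_rw [hs]
  push_cast
  ring
end
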